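/- For a C⁴ function φ and the linear ghost-value extrapolation φ^G = (φ_D + (θ-1)φ(x_i))/θ with φ_D = φ(x_i + θΔ), the truncation error of the modified second-difference operator, τ = φ''(x_i) - (φ(x_{i-1}) - 2φ(x_i) + φ^G)/Δ² with the boundary term scaled appropriately, has leading term (1/2)(1-θ)φ''(x_i), i.e. τ - (1/2)(1-θ)φ''(x_i) = O(Δ) as Δ → 0. -/

import Mathlib

open Filter Topology Asymptotics

theorem taylor_aux (φ : ℝ → ℝ) (hφ : ContDiff ℝ 4 φ) (x : ℝ) :
    (fun h : ℝ => φ (x + h) - φ x - h * iteratedDeriv 1 φ x - h ^ 2 / 2 * iteratedDeriv 2 φ x)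
      =O[𝓝 0] (fun h : ℝ => h ^ 3) := by
  have h3 : ContDiff ℝ ((3 : ℕ) : WithTop ℕ∞) φ := hφ.of_le (by norm_num)
  have h := (taylor_isLittleO_univ (x₀ := x) h3).isBigO
  have ht : Tendsto (fun h : ℝ => x + h) (𝓝 0) (𝓝 x) := by
    have : Continuous (fun h : ℝ => x + h) := by fun_prop
    simpa using this.tendsto 0
  have h' := h.comp_tendsto ht
  have h2 : (fun h : ℝ => iteratedDeriv 3 φ x / 6 * h ^ 3) =O[𝓝 0] (fun h : ℝ => h ^ 3) :=
    isBigO_const_mul_self _ _ _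
  have e : ((fun y : ℝ => (y - x) ^ 3) ∘ fun h : ℝ => x + h) = fun h : ℝ => h ^ 3 := by
    funext h; simp
  rw [e] at h'
  refine (h'.add h2).congr_left fun t => ?_
  simp only [Function.comp, taylorWithinEval_succ, taylor_within_zero_eval,
    iteratedDerivWithin_univ, smul_eq_mul]
  norm_num [Nat.factorial]
  ring

theorem stmt_2 (φ : ℝ → ℝ) (hφ : ContDiff ℝ 4 φ) (x θ : ℝ) (hθ : θ ∈ Set.Ioc (0:ℝ) 1) :
    (fun Δ : ℝ =>
        (iteratedDeriv 2 φ x -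
          (φ (x - Δ) - 2 * φ x + (φ (x + θ * Δ) + (θ - 1) * φ x) / θ) / Δ ^ 2) -
        (1 / 2) * (1 - θ) * iteratedDeriv 2 φ x)
      =O[𝓝[>] 0] (fun Δ : ℝ => Δ) := by
  have hθ0 : θ ≠ 0 := hθ.1.ne'
  have key : ∀ c : ℝ, (fun Δ : ℝ => φ (x + c * Δ) - φ x - (c * Δ) * iteratedDeriv 1 φ x
      - (c * Δ) ^ 2 / 2 * iteratedDeriv 2 φ x) =O[𝓝[>] 0] (fun Δ : ℝ => Δ ^ 3) := by
    intro c
    have ht : Tendsto (fun h : ℝ => c * h) (𝓝[>] 0) (𝓝 0) := by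
      have : Continuous (fun h : ℝ => c * h) := by fun_prop
      simpa using (this.tendsto 0).mono_left nhdsWithin_le_nhds
    refine ((taylor_aux φ hφ x).comp_tendsto ht).trans ?_
    refine (isBigO_const_mul_self (c ^ 3) (fun Δ : ℝ => Δ ^ 3) _).congr_left fun t => ?_
    simp only [Function.comp]
    ring
  have hs := ((key (-1)).add ((key θ).const_mul_left θ⁻¹)).mul
    (isBigO_refl (fun Δ : ℝ => -(Δ ^ 2)⁻¹) (𝓝[>] 0))
  have hs' := hs.neg_right
  refine hs'.congr' ?_ ?_
  · filter_upwards [self_mem_nhdsWithin] with t ht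
    have : t ≠ 0 := (Set.mem_Ioi.mp ht).ne'
    rw [show x + -1 * t = x - t by ring]
    field_simp
    ring
  · filter_upwards [self_mem_nhdsWithin] with t ht
    have : t ≠ 0 := (Set.mem_Ioi.mp ht).ne'
    field_simp
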